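/- Let f : ℂ → ℂ be a polynomial of degree at least 2, let J(f) be the closure of the set of repelling periodic points of f, and let PC(f) be the closure of the union of the forward orbits {f^{∘n}(c) : n ≥ 1} over all critical points c of f. Then for every open set V ⊆ ℂ containing PC(f), Lebesgue-almost every point z ∈ J(f) has orbit eventually staying in V; that is, the set of z ∈ J(f) for which f^{∘n}(z) ∉ V for infinitely many n has two-dimensional Lebesgue measure zero. -/

import Mathlib

open MeasureTheory Filter Polynomial

/-- The Julia set of `f` : the closure of the set of repelling periodic points. -/
noncomputable def juliaSet (f : ℂ → ℂ) : Set ℂ :=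
  closure {z : ℂ | ∃ n : ℕ, 1 ≤ n ∧ f^[n] z = z ∧ 1 < ‖deriv (f^[n]) z‖}

/-- The post-critical set of a polynomial `f`: the closure of the union of the forward
orbits of the critical points of `f`. -/
noncomputable def postCriticalPoly (f : Polynomial ℂ) : Set ℂ :=
  closure {w : ℂ | ∃ c : ℂ, (Polynomial.derivative f).eval c = 0 ∧
    ∃ n : ℕ, 1 ≤ n ∧ (fun z : ℂ => f.eval z)^[n] c = w}

/-!
Suppose the orbit of `z ∈ J` leaves `V` infinitely often. At each such time `n`, a disc of fixed
radius about `fⁿ z` misses the post-critical set, so the branch of `f⁻ⁿ` sending `fⁿ z` to `z` is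
univalent on it and, by the Koebe distortion theorem, distorts it boundedly on a smaller
concentric disc. Since `J` is compact with empty interior, the complement of `J` fills a definite
proportion of the smaller disc, hence also of a disc of radius `ρₙ` about `z`. The radii `ρₙ` tend
to `0`: otherwise infinitely many iterates would be uniformly bounded on one fixed disc about `z`,
which the growth of the derivatives along a nearby repelling cycle forbids. So `z` is not a
Lebesgue density point of `J`, and almost every point of `J` is one.

Weak forms of Koebe's theorem suffice. They follow from Bloch's theorem: if `g` is univalent and
omits `a`, the image of `log (g - a)` contains no disc of radius exceeding `2π`.
-/

section Distortion

open Metric Set Topology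

variable {g : ℂ → ℂ} {x y p a : ℂ} {r s ε : ℝ} {U : Set ℂ}

theorem ball_subset_image_closedBall_of_deriv_ne_zero (hs : 0 < s) (hsr : s < r)
    (hg : DifferentiableOn ℂ g (ball x r)) (hg' : deriv g x ≠ 0)
    (hε : ∀ z ∈ sphere x s, ε ≤ ‖g z - g x‖) :
    ball (g x) (ε / 2) ⊆ g '' closedBall x s := by
  have hne : ∀ᶠ z in 𝓝[≠] x, g z ≠ g x :=
    (hg.differentiableAt (ball_mem_nhds x (hs.trans hsr))).hasDerivAt.eventually_ne hg'
  exact (hg.diffContOnCl_ball (closedBall_subset_ball hsr)).ball_subset_image_closedBall hs hε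
    (hne.frequently.filter_mono nhdsWithin_le_nhds)

theorem norm_deriv_mul_le_two_mul_norm_sub (hr : 0 < r) (hg : DifferentiableOn ℂ g (ball x r))
    (hbound : ∀ z ∈ ball x r, ‖deriv g z‖ ≤ 2 * ‖deriv g x‖) (hp : p ∈ closedBall x (r / 6)) :
    ‖deriv g x‖ * ‖p - x‖ ≤ 2 * ‖g p - g x‖ := by
  have hsub : closedBall x (r / 6) ⊆ ball x r := closedBall_subset_ball (by linarith)
  have hderiv : ∀ z ∈ closedBall x (r / 6), ‖deriv g z - deriv g x‖ ≤ ‖deriv g x‖ / 2 := by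
    intro z hz
    have hmaps : MapsTo (deriv g) (ball x r) (closedBall (deriv g x) (3 * ‖deriv g x‖)) := by
      intro w hw
      rw [mem_closedBall_iff_norm]
      linarith [norm_sub_le (deriv g w) (deriv g x), hbound w hw]
    calc ‖deriv g z - deriv g x‖ ≤ 3 * ‖deriv g x‖ / r * ‖z - x‖ := by
          simpa only [dist_eq_norm] using Complex.dist_le_div_mul_dist_of_mapsTo_ball
            (hg.deriv isOpen_ball) hmaps (hsub hz)
      _ ≤ 3 * ‖deriv g x‖ / r * (r / 6) := by gcongr; exact mem_closedBall_iff_norm.1 hz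
      _ = ‖deriv g x‖ / 2 := by field_simp; ring
  have hlinear : ‖(g p - deriv g x * p) - (g x - deriv g x * x)‖ ≤
      ‖deriv g x‖ / 2 * ‖p - x‖ := by
    refine (convex_closedBall x (r / 6)).norm_image_sub_le_of_norm_hasDerivWithin_le
      (f := fun z => g z - deriv g x * z) (f' := fun z => deriv g z - deriv g x) (fun z hz => ?_)
      hderiv (mem_closedBall_self (by positivity)) hp
    have hgz := (hg.differentiableAt (isOpen_ball.mem_nhds (hsub hz))).hasDerivAt
    simpa only [mul_one] using
      (hgz.fun_sub ((hasDerivAt_id' z).const_mul (deriv g x))).hasDerivWithinAt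
  have htriangle := norm_sub_le (g p - g x) ((g p - deriv g x * p) - (g x - deriv g x * x))
  rw [show g p - g x - (g p - deriv g x * p - (g x - deriv g x * x)) = deriv g x * (p - x) by ring,
    norm_mul] at htriangle
  linarith

theorem ball_subset_image_of_norm_deriv_le_two_mul (hr : 0 < r)
    (hg : DifferentiableOn ℂ g (ball x r)) (hg' : deriv g x ≠ 0)
    (hbound : ∀ z ∈ ball x r, ‖deriv g z‖ ≤ 2 * ‖deriv g x‖) :
    ball (g x) (‖deriv g x‖ * r / 24) ⊆ g '' ball x r := by
  have hsphere : ∀ z ∈ sphere x (r / 6), ‖deriv g x‖ * r / 12 ≤ ‖g z - g x‖ := by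
    intro z hz
    have := norm_deriv_mul_le_two_mul_norm_sub hr hg hbound (sphere_subset_closedBall hz)
    rw [mem_sphere_iff_norm.1 hz] at this
    linarith
  have hcover := ball_subset_image_closedBall_of_deriv_ne_zero (by positivity)
    (by linarith : r / 6 < r) hg hg' hsphere
  calc ball (g x) (‖deriv g x‖ * r / 24) = ball (g x) (‖deriv g x‖ * r / 12 / 2) := by ring_nf
    _ ⊆ g '' closedBall x (r / 6) := hcover
    _ ⊆ g '' ball x r := image_mono (closedBall_subset_ball (by linarith))

-- Maximising `‖deriv g p‖ * (r / 2 - ‖p - x‖)` makes `‖deriv g‖` at most double on the disc of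
-- half the remaining radius around the maximiser.
theorem exists_ball_subset_norm_deriv_le_two_mul (hr : 0 < r)
    (hg : DifferentiableOn ℂ g (ball x r)) (hg' : deriv g x ≠ 0) :
    ∃ p t, 0 < t ∧ ball p t ⊆ ball x r ∧ ‖deriv g x‖ * r ≤ 4 * (‖deriv g p‖ * t) ∧
      ∀ z ∈ ball p t, ‖deriv g z‖ ≤ 2 * ‖deriv g p‖ := by
  have hsub : closedBall x (r / 2) ⊆ ball x r := closedBall_subset_ball (by linarith)
  have hx : x ∈ closedBall x (r / 2) := mem_closedBall_self (by positivity)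
  have hcont : ContinuousOn (fun p => ‖deriv g p‖ * (r / 2 - ‖p - x‖)) (closedBall x (r / 2)) :=
    ((hg.deriv isOpen_ball).continuousOn.mono hsub).norm.mul (by fun_prop)
  obtain ⟨p, -, hmax⟩ := (isCompact_closedBall x (r / 2)).exists_isMaxOn ⟨x, hx⟩ hcont
  have hxp : ‖deriv g x‖ * (r / 2) ≤ ‖deriv g p‖ * (r / 2 - ‖p - x‖) := by simpa using hmax hx
  have ht : 0 < r / 2 - ‖p - x‖ := by
    have hpos : 0 < ‖deriv g x‖ * (r / 2) := mul_pos (norm_pos_iff.2 hg') (by positivity)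
    exact pos_of_mul_pos_right (hpos.trans_le hxp) (norm_nonneg _)
  have hdist : ∀ z ∈ ball p ((r / 2 - ‖p - x‖) / 2), (r / 2 - ‖p - x‖) / 2 ≤ r / 2 - ‖z - x‖ := by
    intro z hz
    linarith [norm_sub_le_norm_sub_add_norm_sub z p x, mem_ball_iff_norm.1 hz]
  refine ⟨p, (r / 2 - ‖p - x‖) / 2, half_pos ht, fun z hz => ?_, by linarith, fun z hz => ?_⟩
  · rw [mem_ball_iff_norm]
    linarith [hdist z hz]
  · have hz' : z ∈ closedBall x (r / 2) := by
      rw [mem_closedBall_iff_norm]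
      linarith [hdist z hz]
    refine le_of_mul_le_mul_right ?_ (half_pos ht)
    calc ‖deriv g z‖ * ((r / 2 - ‖p - x‖) / 2) ≤ ‖deriv g z‖ * (r / 2 - ‖z - x‖) := by
          gcongr; exact hdist z hz
      _ ≤ ‖deriv g p‖ * (r / 2 - ‖p - x‖) := hmax hz'
      _ = 2 * ‖deriv g p‖ * ((r / 2 - ‖p - x‖) / 2) := by ring

theorem exists_ball_subset_image_ball (hr : 0 < r) (hg : DifferentiableOn ℂ g (ball x r)) :
    ∃ c, ball c (‖deriv g x‖ * r / 96) ⊆ g '' ball x r := by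
  by_cases hg' : deriv g x = 0
  · simp [hg']
  obtain ⟨p, t, ht, hsub, hpt, hbound⟩ := exists_ball_subset_norm_deriv_le_two_mul hr hg hg'
  have hp : deriv g p ≠ 0 := by
    intro hzero
    have : 0 < ‖deriv g x‖ * r := mul_pos (norm_pos_iff.2 hg') hr
    simp only [hzero, norm_zero, zero_mul, mul_zero] at hpt
    linarith
  exact ⟨g p, (ball_subset_ball (by linarith)).trans
    ((ball_subset_image_of_norm_deriv_le_two_mul ht (hg.mono hsub) hp hbound).trans
      (image_mono hsub))⟩

theorem exists_hasDerivAt_logDeriv_eqOn_exp (hg : DifferentiableOn ℂ g (ball x r))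
    (hne : ∀ z ∈ ball x r, g z ≠ 0) :
    ∃ L : ℂ → ℂ, (∀ z ∈ ball x r, HasDerivAt L (logDeriv g z) z) ∧
      EqOn (fun z => Complex.exp (L z)) g (ball x r) := by
  rcases le_or_gt r 0 with hr | hr
  · simp [ball_eq_empty.2 hr]
  have hx : x ∈ ball x r := mem_ball_self hr
  obtain ⟨L, hLx, hL⟩ := (((hg.deriv isOpen_ball).div hg hne).isExactOn_ball).with_val_at x
    (Complex.log (g x))
  have hlog : EqOn (logDeriv fun z => Complex.exp (L z)) (logDeriv g) (ball x r) := by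
    intro z hz
    simp [logDeriv_apply, (hL z hz).cexp.deriv]
  obtain ⟨k, -, hk⟩ := (logDeriv_eqOn_iff
    (fun z hz => (hL z hz).cexp.differentiableAt.differentiableWithinAt) hg isOpen_ball
    (convex_ball x r).isPreconnected hne fun z _ => Complex.exp_ne_zero _).1 hlog
  have hk1 : k = 1 := by
    have := hk hx
    simp only [hLx, Complex.exp_log (hne x hx), Pi.smul_apply, smul_eq_mul] at this
    exact (right_eq_mul₀ (hne x hx)).1 this
  exact ⟨L, hL, by simpa only [hk1, one_smul] using hk⟩

/-- The constant of the Koebe-type inequality `norm_deriv_mul_radius_le_of_injOn`; the optimal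
value is `4`. -/
noncomputable def koebeConst : ℝ := 192 * Real.pi

/-- The constant of the growth estimate `norm_sub_le_growthConst_mul_of_injOn` for univalent
functions. -/
noncomputable def growthConst : ℝ := Real.exp (koebeConst + 1)

theorem koebeConst_pos : 0 < koebeConst := by
  unfold koebeConst
  positivity

theorem growthConst_pos : 0 < growthConst := Real.exp_pos _

theorem one_le_koebeConst_mul_growthConst : 1 ≤ koebeConst * growthConst := by
  refine one_le_mul_of_one_le_of_one_le ?_ (Real.one_le_exp (by linarith [koebeConst_pos]))
  unfold koebeConst
  linarith [Real.pi_gt_three]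

-- A branch of `log (g - a)` is univalent modulo `2πi`, so its image contains no disc of radius
-- larger than `2π`.
theorem norm_deriv_mul_radius_le_of_injOn (hr : 0 < r) (hg : DifferentiableOn ℂ g (ball x r))
    (hinj : InjOn g (ball x r)) (ha : ∀ z ∈ ball x r, g z ≠ a) :
    ‖deriv g x‖ * r ≤ koebeConst * ‖g x - a‖ := by
  have hx : x ∈ ball x r := mem_ball_self hr
  have hga : 0 < ‖g x - a‖ := norm_pos_iff.2 (sub_ne_zero.2 (ha x hx))
  obtain ⟨L, hL, hexp⟩ := exists_hasDerivAt_logDeriv_eqOn_exp (hg.sub_const a)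
    fun z hz => sub_ne_zero.2 (ha z hz)
  obtain ⟨c, hc⟩ := exists_ball_subset_image_ball hr
    fun z hz => (hL z hz).differentiableAt.differentiableWithinAt
  have hradius : ‖deriv L x‖ * r / 96 ≤ 2 * Real.pi := by
    by_contra! hlt
    obtain ⟨p, hp, hpc⟩ := hc (mem_ball_self (Real.two_pi_pos.trans hlt))
    obtain ⟨q, hq, hqc⟩ : c + 2 * Real.pi * Complex.I ∈ L '' ball x r := by
      apply hc
      simpa [abs_of_pos Real.pi_pos] using hlt
    have hpq : g p - a = g q - a := by
      calc g p - a = Complex.exp (L p) := (hexp hp).symm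
        _ = Complex.exp (L q) := by rw [hpc, hqc, Complex.exp_periodic]
        _ = g q - a := hexp hq
    rw [← hinj hp hq (sub_left_injective hpq), hpc] at hqc
    exact Complex.two_pi_I_ne_zero (left_eq_add.1 hqc)
  rw [(hL x hx).deriv, logDeriv_apply, deriv_sub_const, norm_div] at hradius
  calc ‖deriv g x‖ * r = 96 * (‖deriv g x‖ / ‖g x - a‖ * r / 96) * ‖g x - a‖ := by field_simp
    _ ≤ 96 * (2 * Real.pi) * ‖g x - a‖ := by gcongr
    _ = koebeConst * ‖g x - a‖ := by unfold koebeConst; ring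

theorem norm_deriv_mul_norm_sub_le_of_injOn (hg : DifferentiableOn ℂ g U) (hinj : InjOn g U)
    (hp : p ∈ U) (hsub : ball x ‖x - p‖ ⊆ U) :
    ‖deriv g x‖ * ‖x - p‖ ≤ koebeConst * ‖g x - g p‖ := by
  rcases eq_or_ne x p with rfl | hxp
  · simp
  refine norm_deriv_mul_radius_le_of_injOn (norm_pos_iff.2 (sub_ne_zero.2 hxp)) (hg.mono hsub)
    (hinj.mono hsub) fun z hz hzp => ?_
  rw [hinj (hsub hz) hp hzp, mem_ball_iff_norm'] at hz
  exact lt_irrefl _ hz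

theorem norm_le_exp_mul_of_norm_logDeriv_le {A : ℝ} (hs : 0 < s) (hsr : s < r)
    (hg : DifferentiableOn ℂ g (ball y r)) (hne : ∀ z ∈ ball y r, g z ≠ 0)
    (hbound : ∀ z ∈ sphere y s, ‖logDeriv g z‖ ≤ A / s) (hp : p ∈ closedBall y s) :
    ‖g p‖ ≤ Real.exp A * ‖g y‖ := by
  have hsub : closedBall y s ⊆ ball y r := closedBall_subset_ball hsr
  have hy : y ∈ closedBall y s := mem_closedBall_self hs.le
  obtain ⟨L, hL, hexp⟩ := exists_hasDerivAt_logDeriv_eqOn_exp hg hne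
  have hlog : DifferentiableOn ℂ (logDeriv g) (ball y r) := (hg.deriv isOpen_ball).div hg hne
  have hmax : ∀ z ∈ closedBall y s, ‖logDeriv g z‖ ≤ A / s := by
    intro z hz
    refine Complex.norm_le_of_forall_mem_frontier_norm_le isBounded_ball
      (hlog.diffContOnCl_ball hsub) ?_ (by rwa [closure_ball _ hs.ne'])
    rwa [frontier_ball _ hs.ne']
  have hLp : ‖L p - L y‖ ≤ A :=
    calc ‖L p - L y‖ ≤ A / s * ‖p - y‖ :=
          (convex_closedBall y s).norm_image_sub_le_of_norm_hasDerivWithin_le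
            (fun w hw => (hL w (hsub hw)).hasDerivWithinAt) hmax hy hp
      _ ≤ A / s * s := by
          gcongr
          exacts [(norm_nonneg _).trans (hmax y hy), mem_closedBall_iff_norm.1 hp]
      _ = A := div_mul_cancel₀ A hs.ne'
  calc ‖g p‖ = ‖Complex.exp (L p - L y)‖ * ‖g y‖ := by
        rw [← hexp (hsub hp), ← hexp (hsub hy), ← norm_mul, ← Complex.exp_add, sub_add_cancel]
    _ ≤ Real.exp A * ‖g y‖ := by
        rw [Complex.norm_exp]
        gcongr
        exact (Complex.re_le_norm _).trans hLp

theorem norm_logDeriv_dslope_le (hg : DifferentiableOn ℂ g (ball y r))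
    (hinj : InjOn g (ball y r)) (hpy : p ≠ y) (hpr : 2 * ‖p - y‖ ≤ r) :
    ‖logDeriv (dslope g y) p‖ ≤ (koebeConst + 1) / ‖p - y‖ := by
  have hpos : 0 < ‖p - y‖ := norm_pos_iff.2 (sub_ne_zero.2 hpy)
  have hp : p ∈ ball y r := by rw [mem_ball_iff_norm]; linarith
  have hy : y ∈ ball y r := mem_ball_self (by linarith)
  have hgp : g p - g y ≠ 0 := sub_ne_zero.2 (hinj.ne hp hy hpy)
  have hslope : dslope g y =ᶠ[𝓝 p] fun z => (g z - g y) / (z - y) := by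
    filter_upwards [isOpen_ne.mem_nhds hpy] with z hz
    rw [dslope_of_ne _ hz, slope_def_field]
  have hlog : logDeriv (dslope g y) p = deriv g p / (g p - g y) - 1 / (p - y) := by
    rw [(logDeriv_congr_nhds hslope).eq_of_nhds,
      logDeriv_div (g := fun z => z - y) p hgp (sub_ne_zero.2 hpy)
        ((hg.differentiableAt (isOpen_ball.mem_nhds hp)).sub_const _) (by fun_prop)]
    simp [logDeriv_apply]
  have hkoebe : ‖deriv g p‖ / ‖g p - g y‖ ≤ koebeConst / ‖p - y‖ := by
    rw [div_le_div_iff₀ (norm_pos_iff.2 hgp) hpos]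
    exact norm_deriv_mul_norm_sub_le_of_injOn hg hinj hy
      (ball_subset_ball' (by rw [dist_eq_norm]; linarith))
  calc ‖logDeriv (dslope g y) p‖ ≤ ‖deriv g p‖ / ‖g p - g y‖ + 1 / ‖p - y‖ := by
        rw [hlog, ← norm_div, ← norm_one (α := ℂ), ← norm_div]
        exact norm_sub_le _ _
    _ ≤ koebeConst / ‖p - y‖ + 1 / ‖p - y‖ := by gcongr
    _ = (koebeConst + 1) / ‖p - y‖ := (add_div _ _ _).symm

theorem norm_sub_le_growthConst_mul_of_injOn (hg : DifferentiableOn ℂ g (ball y r))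
    (hinj : InjOn g (ball y r)) (hg' : deriv g y ≠ 0) (hpr : 2 * ‖p - y‖ ≤ r) :
    ‖g p - g y‖ ≤ growthConst * ‖deriv g y‖ * ‖p - y‖ := by
  rcases eq_or_ne p y with rfl | hpy
  · simp
  have hpos : 0 < ‖p - y‖ := norm_pos_iff.2 (sub_ne_zero.2 hpy)
  have hy : y ∈ ball y r := mem_ball_self (by linarith)
  have hdslope : DifferentiableOn ℂ (dslope g y) (ball y r) :=
    (Complex.differentiableOn_dslope (isOpen_ball.mem_nhds hy)).2 hg
  have hne : ∀ z ∈ ball y r, dslope g y z ≠ 0 := by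
    intro z hz
    rcases eq_or_ne z y with rfl | hzy
    · rwa [dslope_same]
    · rw [dslope_of_ne _ hzy, slope_def_field]
      exact div_ne_zero (sub_ne_zero.2 (hinj.ne hz hy hzy)) (sub_ne_zero.2 hzy)
  have hlog : ∀ z ∈ sphere y ‖p - y‖, ‖logDeriv (dslope g y) z‖ ≤ (koebeConst + 1) / ‖p - y‖ := by
    intro z hz
    rw [mem_sphere_iff_norm] at hz
    rw [← hz]
    exact norm_logDeriv_dslope_le hg hinj (sub_ne_zero.1 (norm_pos_iff.1 (hz ▸ hpos))) (hz ▸ hpr)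
  have hexp := norm_le_exp_mul_of_norm_logDeriv_le hpos (by linarith : ‖p - y‖ < r) hdslope hne
    hlog (mem_closedBall_iff_norm.2 le_rfl)
  rwa [dslope_same, dslope_of_ne _ hpy, slope_def_field, norm_div, div_le_iff₀ hpos] at hexp

theorem norm_deriv_le_mul_norm_deriv_of_injOn (hg : DifferentiableOn ℂ g (ball y (3 * r)))
    (hinj : InjOn g (ball y (3 * r))) (hg' : ∀ z ∈ ball y (3 * r), deriv g z ≠ 0)
    (hp : p ∈ ball y r) : ‖deriv g y‖ ≤ koebeConst * growthConst * ‖deriv g p‖ := by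
  rcases eq_or_ne y p with rfl | hyp
  · exact le_mul_of_one_le_left (norm_nonneg _) one_le_koebeConst_mul_growthConst
  have hpos : 0 < ‖y - p‖ := norm_pos_iff.2 (sub_ne_zero.2 hyp)
  rw [mem_ball_iff_norm'] at hp
  have hsub : ball p (2 * r) ⊆ ball y (3 * r) :=
    ball_subset_ball' (by rw [dist_eq_norm']; linarith)
  have hp' : p ∈ ball y (3 * r) := hsub (mem_ball_self (by linarith))
  refine le_of_mul_le_mul_right ?_ hpos
  calc ‖deriv g y‖ * ‖y - p‖ ≤ koebeConst * ‖g y - g p‖ :=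
        norm_deriv_mul_norm_sub_le_of_injOn hg hinj hp' (ball_subset_ball (by linarith))
    _ ≤ koebeConst * (growthConst * ‖deriv g p‖ * ‖y - p‖) := by
        gcongr
        · exact koebeConst_pos.le
        · exact norm_sub_le_growthConst_mul_of_injOn (hg.mono hsub) (hinj.mono hsub) (hg' p hp')
            (by linarith)
    _ = koebeConst * growthConst * ‖deriv g p‖ * ‖y - p‖ := by ring

theorem ball_subset_image_closedBall_of_injOn (hs : 0 < s) (hsr : s < r)
    (hg : DifferentiableOn ℂ g (ball y r)) (hinj : InjOn g (ball y r)) (hg' : deriv g y ≠ 0) :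
    ball (g y) (‖deriv g y‖ * s / (2 * koebeConst)) ⊆ g '' closedBall y s := by
  have hsphere : ∀ z ∈ sphere y s, ‖deriv g y‖ * s / koebeConst ≤ ‖g z - g y‖ := by
    intro z hz
    have hyz : ‖y - z‖ = s := by rw [norm_sub_rev, mem_sphere_iff_norm.1 hz]
    rw [div_le_iff₀' koebeConst_pos, norm_sub_rev, ← hyz]
    exact norm_deriv_mul_norm_sub_le_of_injOn hg hinj
      (by rwa [mem_ball_iff_norm', hyz]) (ball_subset_ball (by linarith))
  rw [mul_comm 2, ← div_div]
  exact ball_subset_image_closedBall_of_deriv_ne_zero hs hsr hg hg' hsphere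

theorem abs_det_restrictScalars_toSpanSingleton (a : ℂ) :
    |((ContinuousLinearMap.toSpanSingleton ℂ a).restrictScalars ℝ).det| = ‖a‖ ^ 2 := by
  simp [ContinuousLinearMap.det, LinearMap.det_restrictScalars, Algebra.norm_complex_apply,
    Complex.normSq_eq_norm_sq]

theorem lintegral_norm_deriv_sq_eq_volume_image {g' : ℂ → ℂ} {A : Set ℂ} (hA : MeasurableSet A)
    (hg : ∀ z ∈ A, HasDerivWithinAt g (g' z) A z) (hinj : InjOn g A) :
    ∫⁻ z in A, ENNReal.ofReal (‖g' z‖ ^ 2) = volume (g '' A) := by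
  simp_rw [← abs_det_restrictScalars_toSpanSingleton]
  exact lintegral_abs_det_fderiv_eq_addHaar_image volume hA
    (fun z hz => (hg z hz).hasFDerivWithinAt.restrictScalars ℝ) hinj

theorem ofReal_sq_mul_volume_le_volume_image {g' : ℂ → ℂ} {A : Set ℂ} (hA : MeasurableSet A)
    (hg : ∀ z ∈ A, HasDerivWithinAt g (g' z) A z) (hinj : InjOn g A) (hs : 0 ≤ s)
    (hbound : ∀ z ∈ A, s ≤ ‖g' z‖) : ENNReal.ofReal (s ^ 2) * volume A ≤ volume (g '' A) := by
  rw [← lintegral_norm_deriv_sq_eq_volume_image hA hg hinj, ← setLIntegral_const]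
  refine setLIntegral_mono' hA fun z hz => ?_
  gcongr
  exact hbound z hz

theorem mapsTo_ball_closedBall_of_injOn (hg : DifferentiableOn ℂ g (ball y (2 * r)))
    (hinj : InjOn g (ball y (2 * r))) (hg' : deriv g y ≠ 0) :
    MapsTo g (ball y r) (closedBall (g y) (growthConst * ‖deriv g y‖ * r)) := by
  intro p hp
  rw [mem_ball_iff_norm] at hp
  rw [mem_closedBall_iff_norm]
  calc ‖g p - g y‖ ≤ growthConst * ‖deriv g y‖ * ‖p - y‖ :=
        norm_sub_le_growthConst_mul_of_injOn hg hinj hg' (by linarith)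
    _ ≤ growthConst * ‖deriv g y‖ * r :=
        mul_le_mul_of_nonneg_left hp.le (mul_nonneg growthConst_pos.le (norm_nonneg _))

theorem volume_mul_volume_closedBall_le_of_injOn (hg : DifferentiableOn ℂ g (ball y (3 * r)))
    (hinj : InjOn g (ball y (3 * r))) (hg' : ∀ z ∈ ball y (3 * r), deriv g z ≠ 0) {A : Set ℂ}
    (hA : MeasurableSet A) (hAr : A ⊆ ball y r) :
    volume A * volume (closedBall (g y) (growthConst * ‖deriv g y‖ * r)) ≤
      ENNReal.ofReal ((koebeConst * growthConst ^ 2) ^ 2) * volume (closedBall y r) *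
        volume (g '' A) := by
  have hK := koebeConst_pos
  have hE := growthConst_pos
  have hsub : A ⊆ ball y (3 * r) := fun p hp =>
    ball_subset_ball (by linarith [pos_of_mem_ball (hAr hp)]) (hAr hp)
  have himage := ofReal_sq_mul_volume_le_volume_image hA
    (fun z hz => (hg.differentiableAt (isOpen_ball.mem_nhds (hsub hz))).hasDerivAt.hasDerivWithinAt)
    (hinj.mono hsub) (s := ‖deriv g y‖ / (koebeConst * growthConst)) (by positivity)
    fun p hp => by
      rw [div_le_iff₀' (by positivity)]
      exact norm_deriv_le_mul_norm_deriv_of_injOn hg hinj hg' (hAr hp)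
  have hscale : volume (closedBall (g y) (growthConst * ‖deriv g y‖ * r)) =
      ENNReal.ofReal ((koebeConst * growthConst ^ 2) ^ 2) *
        ENNReal.ofReal ((‖deriv g y‖ / (koebeConst * growthConst)) ^ 2) *
          volume (closedBall y r) := by
    rw [Complex.volume_closedBall, Complex.volume_closedBall, ← ENNReal.ofReal_mul (by positivity),
      ENNReal.ofReal_mul (by positivity), mul_pow, ← ENNReal.ofReal_pow (by positivity), mul_assoc]
    congr 2
    field_simp
  rw [hscale]
  calc _ = ENNReal.ofReal ((koebeConst * growthConst ^ 2) ^ 2) * volume (closedBall y r) *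
        (ENNReal.ofReal ((‖deriv g y‖ / (koebeConst * growthConst)) ^ 2) * volume A) := by ring
    _ ≤ _ := by gcongr

-- A local inverse `g` of `F` maps the complement of a forward invariant set into itself.
theorem volume_ball_sdiff_mul_volume_closedBall_le {F : ℂ → ℂ} {S : Set ℂ}
    (hg : DifferentiableOn ℂ g (ball y (3 * r))) (hg' : ∀ z ∈ ball y (3 * r), deriv g z ≠ 0)
    (hFg : LeftInvOn F g (ball y (3 * r))) (hFS : MapsTo F S S) (hS : MeasurableSet S) :
    volume (ball y r \ S) * volume (closedBall (g y) (growthConst * ‖deriv g y‖ * r)) ≤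
      ENNReal.ofReal ((koebeConst * growthConst ^ 2) ^ 2) * volume (closedBall y r) *
        volume (Sᶜ ∩ closedBall (g y) (growthConst * ‖deriv g y‖ * r)) := by
  rcases le_or_gt r 0 with hr | hr
  · simp [ball_eq_empty.2 hr]
  have hsub : ball y (2 * r) ⊆ ball y (3 * r) := ball_subset_ball (by linarith)
  refine (volume_mul_volume_closedBall_le_of_injOn hg hFg.injOn hg' (measurableSet_ball.diff hS)
    sdiff_subset).trans ?_
  gcongr
  rintro _ ⟨p, ⟨hp, hpS⟩, rfl⟩
  refine ⟨fun hgp => hpS ?_, mapsTo_ball_closedBall_of_injOn (hg.mono hsub)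
    (hFg.injOn.mono hsub) (hg' y (mem_ball_self (by linarith))) hp⟩
  rw [← hFg (ball_subset_ball (by linarith) hp)]
  exact hFS hgp

end Distortion

theorem exists_pos_le_measure_ball_sdiff {X : Type*} [PseudoMetricSpace X]
    [MeasurableSpace X] {μ : Measure X} [μ.IsOpenPosMeasure] {K : Set X}
    (hK : IsCompact K) (hKc : IsClosed K) (hint : interior K = ∅) {r : ℝ} (hr : 0 < r) :
    ∃ m, 0 < m ∧ ∀ y ∈ K, m ≤ μ (Metric.ball y r \ K) := by
  obtain ⟨t, -, ht, hcover⟩ := hK.finite_cover_balls (half_pos hr)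
  refine ⟨ht.toFinset.inf fun x => μ (Metric.ball x (r / 2) \ K), ?_, fun y hy => ?_⟩
  · rw [Finset.lt_inf_iff (by simp)]
    intro x _
    refine (Metric.isOpen_ball.sdiff hKc).measure_pos μ (Set.sdiff_nonempty.2 fun hsub => ?_)
    have := interior_maximal hsub Metric.isOpen_ball (Metric.mem_ball_self (half_pos hr))
    simp [hint] at this
  · obtain ⟨x, hx, hyx⟩ := Set.mem_iUnion₂.1 (hcover hy)
    refine (Finset.inf_le (ht.mem_toFinset.2 hx)).trans (measure_mono ?_)
    refine Set.sdiff_subset_sdiff_left (Metric.ball_subset_ball' ?_)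
    rw [Metric.mem_ball'] at hyx
    linarith

section IterateDeriv

variable {𝕜 : Type*} [NontriviallyNormedField 𝕜] {f : 𝕜 → 𝕜} {p : 𝕜} {m n : ℕ}

theorem deriv_iterate_add (hf : Differentiable 𝕜 f) (m n : ℕ) (z : 𝕜) :
    deriv f^[m + n] z = deriv f^[m] (f^[n] z) * deriv f^[n] z := by
  rw [Function.iterate_add]
  exact deriv_comp z (hf.iterate m).differentiableAt (hf.iterate n).differentiableAt

theorem deriv_iterate_mul_of_isPeriodicPt (hf : Differentiable 𝕜 f)
    (hp : Function.IsPeriodicPt f m p) (k : ℕ) : deriv f^[m * k] p = deriv f^[m] p ^ k := by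
  rw [Function.iterate_mul]
  exact (HasDerivAt.iterate p (hf.iterate m).differentiableAt.hasDerivAt hp k).deriv

theorem deriv_iterate_ne_zero_of_isPeriodicPt (hf : Differentiable 𝕜 f) (hm : 1 ≤ m)
    (hp : Function.IsPeriodicPt f m p) (hmult : deriv f^[m] p ≠ 0) (n : ℕ) :
    deriv f^[n] p ≠ 0 := by
  have hle : n ≤ m * n := Nat.le_mul_of_pos_left n hm
  have hpow := deriv_iterate_mul_of_isPeriodicPt hf hp n
  rw [← Nat.sub_add_cancel hle, deriv_iterate_add hf] at hpow
  exact right_ne_zero_of_mul (hpow.trans_ne (pow_ne_zero n hmult))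

theorem deriv_iterate_apply_eq_of_isPeriodicPt (hf : Differentiable 𝕜 f)
    (hp : Function.IsPeriodicPt f n p) (hfp : deriv f p ≠ 0) :
    deriv f^[n] (f p) = deriv f^[n] p := by
  have hcomm := deriv_iterate_add hf n 1 p
  rw [add_comm, deriv_iterate_add hf 1 n p, hp.eq, mul_comm] at hcomm
  exact (mul_right_cancel₀ hfp hcomm).symm

-- Write `n = n % m + m * (n / m)`: only finitely many factors `deriv f^[n % m] p` occur.
theorem tendsto_norm_deriv_iterate_atTop (hf : Differentiable 𝕜 f) (hm : 1 ≤ m)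
    (hp : Function.IsPeriodicPt f m p) (hmult : 1 < ‖deriv f^[m] p‖) :
    Tendsto (fun n => ‖deriv f^[n] p‖) atTop atTop := by
  have hsplit : ∀ n, deriv f^[n] p = deriv f^[n % m] p * deriv f^[m] p ^ (n / m) := by
    intro n
    conv_lhs => rw [← Nat.mod_add_div n m]
    rw [deriv_iterate_add hf, (hp.mul_const _).eq, deriv_iterate_mul_of_isPeriodicPt hf hp]
  obtain ⟨j, -, hj⟩ := (Finset.range m).exists_min_image (fun j => ‖deriv f^[j] p‖)
    (Finset.nonempty_range_iff.2 (by lia))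
  have hj_pos : 0 < ‖deriv f^[j] p‖ := norm_pos_iff.2
    (deriv_iterate_ne_zero_of_isPeriodicPt hf hm hp (norm_pos_iff.1 (one_pos.trans hmult)) j)
  have hpow : Tendsto (fun n => ‖deriv f^[j] p‖ * ‖deriv f^[m] p‖ ^ (n / m)) atTop atTop :=
    ((tendsto_pow_atTop_atTop_of_one_lt hmult).comp
      (Nat.tendsto_div_const_atTop (by lia))).const_mul_atTop hj_pos
  refine tendsto_atTop_mono (fun n => ?_) hpow
  rw [hsplit n, norm_mul, norm_pow]
  gcongr
  exact hj _ (Finset.mem_range.2 (Nat.mod_lt _ (by lia)))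

end IterateDeriv

section JuliaSet

open Metric Set Topology

variable {f : ℂ → ℂ} {z : ℂ} {r : ℝ} {N : Set ℕ}

theorem isClosed_juliaSet : IsClosed (juliaSet f) := isClosed_closure

theorem mapsTo_juliaSet (hf : Differentiable ℂ f) : MapsTo f (juliaSet f) (juliaSet f) := by
  refine MapsTo.closure ?_ hf.continuous
  rintro p ⟨n, hn, hp, hmult⟩
  have hfp : deriv f p ≠ 0 := deriv_iterate_ne_zero_of_isPeriodicPt hf hn hp
    (norm_pos_iff.1 (one_pos.trans hmult)) 1
  exact ⟨n, hn, Function.IsPeriodicPt.apply hp,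
    by rwa [deriv_iterate_apply_eq_of_isPeriodicPt hf hp hfp]⟩

theorem exists_lt_norm_iterate_of_mem_juliaSet (hf : Differentiable ℂ f) (hz : z ∈ juliaSet f)
    (hr : 0 < r) (hN : N.Infinite) (R : ℝ) : ∃ n ∈ N, ∃ w ∈ ball z r, R < ‖f^[n] w‖ := by
  obtain ⟨p, hpz, m, hm, hp, hmult⟩ := mem_closure_iff.1 hz _ isOpen_ball (mem_ball_self hr)
  obtain ⟨s, hs, hsub⟩ := nhds_basis_closedBall.mem_iff.1 (isOpen_ball.mem_nhds hpz)
  obtain ⟨n, hnN, hn⟩ := ((Nat.frequently_atTop_iff_infinite.2 hN).and_eventually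
    ((tendsto_norm_deriv_iterate_atTop hf hm hp hmult).eventually_gt_atTop (R / s))).exists
  refine ⟨n, hnN, ?_⟩
  by_contra! hbound
  exact hn.not_ge (Complex.norm_deriv_le_of_forall_mem_sphere_norm_le hs
    (hf.iterate n).diffContOnCl fun w hw => hbound w (hsub (sphere_subset_closedBall hw)))

theorem interior_juliaSet_eq_empty (hf : Differentiable ℂ f)
    (hb : Bornology.IsBounded (juliaSet f)) : interior (juliaSet f) = ∅ := by
  rw [eq_empty_iff_forall_notMem]
  intro z hz
  obtain ⟨r, hr, hsub⟩ := Metric.isOpen_iff.1 isOpen_interior z hz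
  obtain ⟨R, hR⟩ := hb.exists_norm_le
  obtain ⟨n, -, w, hw, hlt⟩ := exists_lt_norm_iterate_of_mem_juliaSet hf (interior_subset hz) hr
    infinite_univ R
  exact hlt.not_ge (hR _ ((mapsTo_juliaSet hf).iterate n (interior_subset (hsub hw))))

theorem isBounded_juliaSet (hf : ∀ᶠ z in Bornology.cobounded ℂ, ‖z‖ < ‖f z‖) :
    Bornology.IsBounded (juliaSet f) := by
  obtain ⟨R, -, hR⟩ := hasBasis_cobounded_norm.eventually_iff.1 hf
  refine isBounded_closedBall.subset (closure_minimal ?_ (isClosed_closedBall (x := 0) (ε := R)))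
  rintro z ⟨n, hn, hz, -⟩
  rw [mem_closedBall_zero_iff]
  by_contra! hzR
  have hescape : ∀ k, ‖z‖ ≤ ‖f^[k] z‖ := by
    intro k
    induction k with
    | zero => rfl
    | succ k ih =>
      rw [Function.iterate_succ_apply']
      exact ih.trans (hR (hzR.le.trans ih)).le
  obtain ⟨k, rfl⟩ := Nat.exists_eq_add_of_le' hn
  have hlt := hR (hzR.le.trans (hescape k))
  rw [← Function.iterate_succ_apply' f k z, hz] at hlt
  exact hlt.not_ge (hescape k)

end JuliaSet

section PolynomialDynamics

open Metric Set

theorem eventually_norm_lt_norm_eval {𝕜 : Type*} [NormedField 𝕜] (P : 𝕜[X])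
    (hP : 2 ≤ P.natDegree) : ∀ᶠ z in Bornology.cobounded 𝕜, ‖z‖ < ‖P.eval z‖ := by
  have hdivX : 0 < P.divX.degree := by
    rw [← natDegree_pos_iff_degree_pos, natDegree_divX_eq_natDegree_tsub_one]
    lia
  have hlarge := P.divX.tendsto_norm_atTop hdivX (tendsto_norm_cobounded_atTop (E := 𝕜))
  filter_upwards [hlarge.eventually_ge_atTop 2,
    (tendsto_norm_cobounded_atTop (E := 𝕜)).eventually_gt_atTop ‖P.coeff 0‖] with z hz hz'
  have heval : P.eval z = P.divX.eval z * z + P.coeff 0 := by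
    conv_lhs => rw [← P.divX_mul_X_add]
    simp
  calc ‖z‖ < 2 * ‖z‖ - ‖P.coeff 0‖ := by linarith
    _ ≤ ‖P.divX.eval z * z‖ - ‖P.coeff 0‖ := by rw [norm_mul]; gcongr
    _ ≤ ‖P.eval z‖ := heval ▸ norm_sub_le_norm_add _ _

theorem iterate_mem_postCriticalPoly_of_deriv_eq_zero (f : ℂ[X]) {n : ℕ} {c : ℂ}
    (hc : deriv (fun w => f.eval w)^[n] c = 0) :
    (fun w => f.eval w)^[n] c ∈ postCriticalPoly f := by
  induction n generalizing c with
  | zero => simp at hc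
  | succ n ih =>
    rw [deriv_iterate_add f.differentiable, mul_eq_zero] at hc
    rcases hc with hc | hc
    · exact ih hc
    · exact subset_closure ⟨c, by simpa using hc, n + 1, Nat.le_add_left 1 n, rfl⟩

theorem exists_continuousOn_leftInvOn_eval {P : ℂ[X]} {U : Set ℂ} {z : ℂ}
    (hUc : IsSimplyConnected U) (hUo : IsOpen U) (hz : P.eval z ∈ U)
    (hcrit : ∀ c, P.derivative.eval c = 0 → P.eval c ∉ U) :
    ∃ g : ℂ → ℂ, ContinuousOn g U ∧ g (P.eval z) = z ∧ LeftInvOn (fun w => P.eval w) g U := by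
  classical
  have := hUc.simplyConnectedSpace
  have := hUo.locallyPathConnectedSpace
  obtain ⟨G, ⟨hGz, hG⟩, -⟩ := P.isCoveringMapOn_eval.existsUnique_continuousMap_lifts
    (a₀ := ⟨P.eval z, hz⟩) (e₀ := z) (⟨Subtype.val, continuous_subtype_val⟩ : C(U, ℂ)) rfl (by
      rintro p ⟨c, hc, hcp⟩
      have hcp' : P.eval c = p := hcp
      exact hcrit c hc (hcp' ▸ p.2))
  obtain ⟨g, hg⟩ : ∃ g : ℂ → ℂ, ∀ p : U, g p = G p :=
    ⟨fun p => if hp : p ∈ U then G ⟨p, hp⟩ else 0, by simp⟩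
  refine ⟨g, ?_, (hg ⟨P.eval z, hz⟩).trans hGz, fun p hp => ?_⟩
  · rw [continuousOn_iff_continuous_domRestrict]
    exact G.continuous.congr fun p => (hg p).symm
  · simpa [← hg] using congrFun hG ⟨p, hp⟩

theorem exists_differentiableOn_leftInvOn_eval {P : ℂ[X]} {U : Set ℂ} {z : ℂ}
    (hUc : IsSimplyConnected U) (hUo : IsOpen U) (hz : P.eval z ∈ U)
    (hcrit : ∀ c, P.derivative.eval c = 0 → P.eval c ∉ U) :
    ∃ g : ℂ → ℂ, DifferentiableOn ℂ g U ∧ (∀ p ∈ U, deriv g p ≠ 0) ∧ g (P.eval z) = z ∧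
      LeftInvOn (fun w => P.eval w) g U := by
  obtain ⟨g, hgc, hgz, hPg⟩ := exists_continuousOn_leftInvOn_eval hUc hUo hz hcrit
  have hne : ∀ p ∈ U, P.derivative.eval (g p) ≠ 0 := by
    intro p hp hzero
    have hPgp : P.eval (g p) = p := hPg hp
    exact hcrit _ hzero (by rwa [hPgp])
  have hg : ∀ p ∈ U, HasDerivAt g (P.derivative.eval (g p))⁻¹ p := by
    intro p hp
    refine HasDerivAt.of_local_left_inverse (hgc.continuousAt (hUo.mem_nhds hp))
      (P.hasDerivAt _) (hne p hp) ?_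
    filter_upwards [hUo.mem_nhds hp] with q hq using hPg hq
  exact ⟨g, fun p hp => (hg p hp).differentiableAt.differentiableWithinAt,
    fun p hp => by rw [(hg p hp).deriv]; exact inv_ne_zero (hne p hp), hgz, hPg⟩

theorem isSimplyConnected_of_convex {E : Type*} [AddCommGroup E] [Module ℝ E]
    [TopologicalSpace E] [ContinuousAdd E] [ContinuousSMul ℝ E] {s : Set E} (hs : Convex ℝ s)
    (hne : s.Nonempty) : IsSimplyConnected s := by
  have := hs.contractibleSpace hne
  exact inferInstanceAs (SimplyConnectedSpace s)

theorem exists_inverse_branch_iterate {f : ℂ[X]} {z : ℂ} {n : ℕ} {r : ℝ} (hr : 0 < r)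
    (hdisj : Disjoint (ball ((fun w => f.eval w)^[n] z) r) (postCriticalPoly f)) :
    ∃ g : ℂ → ℂ, DifferentiableOn ℂ g (ball ((fun w => f.eval w)^[n] z) r) ∧
      (∀ p ∈ ball ((fun w => f.eval w)^[n] z) r, deriv g p ≠ 0) ∧
      g ((fun w => f.eval w)^[n] z) = z ∧
      LeftInvOn (fun w => f.eval w)^[n] g (ball ((fun w => f.eval w)^[n] z) r) := by
  have hiter : (fun w => f.eval w)^[n] = fun w => (f.comp^[n] X).eval w := by
    funext w
    rw [iterate_comp_eval, eval_X]
  have hcrit : ∀ c, (f.comp^[n] X).derivative.eval c = 0 →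
      (f.comp^[n] X).eval c ∉ ball ((fun w => f.eval w)^[n] z) r := by
    intro c hc hmem
    refine disjoint_left.1 hdisj hmem ?_
    rw [← congrFun hiter c]
    exact iterate_mem_postCriticalPoly_of_deriv_eq_zero f (by rwa [hiter, Polynomial.deriv])
  rw [hiter] at hcrit ⊢
  exact exists_differentiableOn_leftInvOn_eval
    (isSimplyConnected_of_convex (convex_ball _ r) (nonempty_ball.2 hr)) isOpen_ball
    (mem_ball_self hr) hcrit

end PolynomialDynamics

section Porosity

open Metric Set Topology

variable {f : ℂ[X]} {z : ℂ} {r : ℝ}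

theorem exists_mapsTo_iterate_and_volume_sdiff_mul_le {n : ℕ} {S : Set ℂ} (hr : 0 < r)
    (hdisj : Disjoint (ball ((fun w => f.eval w)^[n] z) (3 * r)) (postCriticalPoly f))
    (hfS : MapsTo (fun w => f.eval w)^[n] S S) (hS : MeasurableSet S) :
    ∃ ρ > 0,
      MapsTo (fun w => f.eval w)^[n] (ball z (ρ / (2 * koebeConst * growthConst)))
        (closedBall ((fun w => f.eval w)^[n] z) r) ∧
      volume (ball ((fun w => f.eval w)^[n] z) r \ S) * volume (closedBall z ρ) ≤
        ENNReal.ofReal ((koebeConst * growthConst ^ 2) ^ 2) *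
          volume (closedBall ((fun w => f.eval w)^[n] z) r) * volume (Sᶜ ∩ closedBall z ρ) := by
  obtain ⟨g, hg, hg', hgz, hfg⟩ := exists_inverse_branch_iterate (by positivity) hdisj
  set y := (fun w => f.eval w)^[n] z
  have hy : deriv g y ≠ 0 := hg' y (mem_ball_self (by positivity))
  refine ⟨growthConst * ‖deriv g y‖ * r,
    mul_pos (mul_pos growthConst_pos (norm_pos_iff.2 hy)) hr, fun w hw => ?_, ?_⟩
  · have hscale : growthConst * ‖deriv g y‖ * r / (2 * koebeConst * growthConst) =
        ‖deriv g y‖ * r / (2 * koebeConst) := by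
      field_simp [growthConst_pos.ne']
    rw [hscale, ← hgz] at hw
    obtain ⟨p, hp, rfl⟩ :=
      ball_subset_image_closedBall_of_injOn hr (by linarith) hg hfg.injOn hy hw
    rwa [hfg (closedBall_subset_ball (by linarith) hp)]
  · simpa only [hgz] using volume_ball_sdiff_mul_volume_closedBall_le hg hg' hfg hfS hS

theorem exists_pos_le_volume_compl_juliaSet_inter_closedBall_div
    (hb : Bornology.IsBounded (juliaSet fun w => f.eval w)) (hr : 0 < r) :
    ∃ c, 0 < c ∧ ∀ z ∈ juliaSet fun w => f.eval w, ∀ n,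
      Disjoint (ball ((fun w => f.eval w)^[n] z) (3 * r)) (postCriticalPoly f) →
      ∃ ρ > 0,
        MapsTo (fun w => f.eval w)^[n] (ball z (ρ / (2 * koebeConst * growthConst)))
          (closedBall ((fun w => f.eval w)^[n] z) r) ∧
        c ≤ volume ((juliaSet fun w => f.eval w)ᶜ ∩ closedBall z ρ) /
          volume (closedBall z ρ) := by
  obtain ⟨m, hm, hmle⟩ := exists_pos_le_measure_ball_sdiff (μ := volume)
    (isCompact_of_isClosed_isBounded isClosed_juliaSet hb) isClosed_juliaSet
    (interior_juliaSet_eq_empty f.differentiable hb) hr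
  refine ⟨m / (ENNReal.ofReal ((koebeConst * growthConst ^ 2) ^ 2) *
    volume (closedBall (0 : ℂ) r)), ENNReal.div_pos hm.ne'
    (ENNReal.mul_ne_top ENNReal.ofReal_ne_top measure_closedBall_lt_top.ne),
    fun z hz n hdisj => ?_⟩
  have hmaps := (mapsTo_juliaSet f.differentiable).iterate n
  obtain ⟨ρ, hρ, hball, hvol⟩ := exists_mapsTo_iterate_and_volume_sdiff_mul_le hr hdisj hmaps
    isClosed_juliaSet.measurableSet
  refine ⟨ρ, hρ, hball, ?_⟩
  rw [ENNReal.le_div_iff_mul_le (.inl (measure_closedBall_pos volume z hρ).ne')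
    (.inl measure_closedBall_lt_top.ne), ← ENNReal.mul_div_right_comm,
    ← Measure.addHaar_closedBall_center volume ((fun w => f.eval w)^[n] z)]
  exact ENNReal.div_le_of_le_mul' ((mul_le_mul_left (hmle _ (hmaps hz)) _).trans hvol)

theorem not_tendsto_volume_compl_juliaSet_inter_closedBall_div {N : Set ℕ}
    (hb : Bornology.IsBounded (juliaSet fun w => f.eval w))
    (hz : z ∈ juliaSet fun w => f.eval w) (hr : 0 < r) (hN : N.Infinite)
    (hdisj : ∀ n ∈ N,
      Disjoint (ball ((fun w => f.eval w)^[n] z) (3 * r)) (postCriticalPoly f)) :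
    ¬ Tendsto (fun ρ => volume ((juliaSet fun w => f.eval w)ᶜ ∩ closedBall z ρ) /
      volume (closedBall z ρ)) (𝓝[>] 0) (𝓝 0) := by
  intro htendsto
  obtain ⟨c, hc, hporous⟩ := exists_pos_le_volume_compl_juliaSet_inter_closedBall_div hb hr
  obtain ⟨ρ₀, hρ₀ : 0 < ρ₀, hsmall⟩ :=
    mem_nhdsGT_iff_exists_Ioo_subset.1 (htendsto.eventually_lt_const hc)
  have hκ : 0 < 2 * koebeConst * growthConst :=
    mul_pos (mul_pos two_pos koebeConst_pos) growthConst_pos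
  have hfixed : ∀ n ∈ N, MapsTo (fun w => f.eval w)^[n]
      (ball z (ρ₀ / (2 * koebeConst * growthConst)))
      (closedBall ((fun w => f.eval w)^[n] z) r) := by
    intro n hn
    obtain ⟨ρ, hρ, hball, hle⟩ := hporous z hz n (hdisj n hn)
    have hρρ₀ : ρ₀ ≤ ρ := not_lt.1 fun hlt => (hsmall ⟨hρ, hlt⟩ : _ < _).not_ge hle
    exact hball.mono_left (ball_subset_ball (by gcongr))
  obtain ⟨R, hR⟩ := hb.exists_norm_le
  obtain ⟨n, hn, w, hw, hlt⟩ := exists_lt_norm_iterate_of_mem_juliaSet f.differentiable hz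
    (div_pos hρ₀ hκ) hN (R + r)
  have horbit := hR _ ((mapsTo_juliaSet f.differentiable).iterate n hz)
  exact hlt.not_ge ((norm_le_of_mem_closedBall (hfixed n hn hw)).trans (by gcongr))

end Porosity

/-- Lyubich's theorem: for a polynomial `f` of degree at least two and any open
neighborhood `V` of the post-critical set, the orbit of almost every point of the Julia
set eventually stays in `V`: the set of points whose orbit leaves `V` infinitely often
has Lebesgue measure zero. -/
theorem postCritical_attracts_ae (f : Polynomial ℂ) (hdeg : 2 ≤ f.natDegree)
    (V : Set ℂ) (hV : IsOpen V) (hPCV : postCriticalPoly f ⊆ V) :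
    volume {z : ℂ | z ∈ juliaSet (fun w : ℂ => f.eval w) ∧
      {n : ℕ | (fun w : ℂ => f.eval w)^[n] z ∉ V}.Infinite} = 0 := by
  set F : ℂ → ℂ := fun w => f.eval w
  have hb : Bornology.IsBounded (juliaSet F) :=
    isBounded_juliaSet (eventually_norm_lt_norm_eval f hdeg)
  have hcompact : IsCompact (juliaSet F \ V) :=
    (Metric.isCompact_of_isClosed_isBounded isClosed_juliaSet hb).diff hV
  obtain ⟨δ, hδ, hsub⟩ := hcompact.exists_thickening_subset_open
    (isClosed_closure.isOpen_compl : IsOpen (postCriticalPoly f)ᶜ)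
    fun y hy hyPC => hy.2 (hPCV hyPC)
  rw [measure_eq_zero_iff_ae_notMem]
  filter_upwards [Besicovitch.ae_tendsto_measure_inter_div_of_measurableSet volume
    (isClosed_juliaSet (f := F)).measurableSet.compl] with z htendsto ⟨hz, hinf⟩
  rw [Set.indicator_of_notMem (Set.notMem_compl_iff.2 hz)] at htendsto
  refine not_tendsto_volume_compl_juliaSet_inter_closedBall_div hb hz (r := δ / 3)
    (by positivity) hinf (fun n hn => ?_) htendsto
  have hmem : F^[n] z ∈ juliaSet F \ V := ⟨(mapsTo_juliaSet f.differentiable).iterate n hz, hn⟩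
  rw [mul_div_cancel₀ δ three_ne_zero]
  exact Set.disjoint_left.2 fun w hw => hsub (Metric.ball_subset_thickening hmem δ hw)
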